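/- Let f : ℤⁿ → ℝ ∪ {+∞} be a globally discrete midpoint convex function, let α be a positive integer, and let x ∈ ℤⁿ with 0 ∈ dom f, αx ∈ dom f, and ‖x‖∞ ≥ 2. Then f(0) + f(αx) ≥ f(α⌊x/2⌋) + f(α⌈x/2⌉), where ⌊x/2⌋ and ⌈x/2⌉ denote componentwise rounding of x/2 down and up. -/

import Mathlib

/-- The ℓ∞-norm of an integer vector, as a natural number. -/
def linf {n : ℕ} (z : Fin n → ℤ) : ℕ :=
  Finset.univ.sup fun i => (z i).natAbs

/-- Componentwise round-up of (x+y)/2. -/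
def avgUp {n : ℕ} (x y : Fin n → ℤ) : Fin n → ℤ :=
  fun i => ⌈((x i + y i : ℚ)) / 2⌉

/-- Componentwise round-down of (x+y)/2. -/
def avgDown {n : ℕ} (x y : Fin n → ℤ) : Fin n → ℤ :=
  fun i => ⌊((x i + y i : ℚ)) / 2⌋

/-- A set `S ⊆ ℤⁿ` is discrete midpoint convex. -/
def DMCSet {n : ℕ} (S : Set (Fin n → ℤ)) : Prop :=
  ∀ ⦃x⦄, x ∈ S → ∀ ⦃y⦄, y ∈ S → 2 ≤ linf (x - y) →
    avgUp x y ∈ S ∧ avgDown x y ∈ S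

/-- `f` satisfies discrete midpoint convexity for the pair `(x, y)`.
Values are in `ℝ ∪ {+∞}`, modeled as `WithTop ℝ`. -/
def DMCPair {n : ℕ} (f : (Fin n → ℤ) → WithTop ℝ) (x y : Fin n → ℤ) : Prop :=
  f (avgUp x y) + f (avgDown x y) ≤ f x + f y

/-- `f` is globally discrete midpoint convex. -/
def GloballyDMC {n : ℕ} (f : (Fin n → ℤ) → WithTop ℝ) : Prop :=
  ∀ x y : Fin n → ℤ, 2 ≤ linf (x - y) → DMCPair f x y

/-- The effective domain of `f`. -/
def effDom {n : ℕ} (f : (Fin n → ℤ) → WithTop ℝ) : Set (Fin n → ℤ) :=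
  {x | f x ≠ ⊤}

/-- `f` is locally discrete midpoint convex. -/
def LocallyDMC {n : ℕ} (f : (Fin n → ℤ) → WithTop ℝ) : Prop :=
  DMCSet (effDom f) ∧ ∀ x y : Fin n → ℤ, linf (x - y) = 2 → DMCPair f x y

theorem two_le_linf_iff {n : ℕ} (z : Fin n → ℤ) : 2 ≤ linf z ↔ ∃ i, 2 ≤ (z i).natAbs := by
  simp [linf, Finset.le_sup_iff]

theorem floor_intCast_half (a : ℤ) : ⌊(a : ℚ) / 2⌋ = a / 2 := by
  exact_mod_cast Rat.floor_intCast_div_natCast a 2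

theorem ceil_intCast_half (a : ℤ) : ⌈(a : ℚ) / 2⌉ = (a + 1) / 2 := by
  have h : ⌈(a : ℚ) / 2⌉ = -⌊((-a : ℤ) : ℚ) / 2⌋ := by
    rw [← Int.ceil_neg]
    congr 1
    push_cast
    ring
  rw [h, floor_intCast_half]
  omega

theorem avgUp_apply {n : ℕ} (x y : Fin n → ℤ) (i : Fin n) :
    avgUp x y i = (x i + y i + 1) / 2 := by
  simpa [avgUp] using ceil_intCast_half (x i + y i)

theorem avgDown_apply {n : ℕ} (x y : Fin n → ℤ) (i : Fin n) :
    avgDown x y i = (x i + y i) / 2 := by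
  simpa [avgDown] using floor_intCast_half (x i + y i)

theorem avgUp_add_avgDown {n : ℕ} (x y : Fin n → ℤ) : avgUp x y + avgDown x y = x + y := by
  funext i
  simp only [Pi.add_apply, avgUp_apply, avgDown_apply]
  omega

theorem sq_ceil_half_add_sq_floor_half_le (a b : ℤ) :
    ((a + b + 1) / 2) ^ 2 + ((a + b) / 2) ^ 2 ≤ a ^ 2 + b ^ 2 := by
  rcases Int.even_or_odd' (a + b) with ⟨c, hc | hc⟩
  · rw [show (a + b + 1) / 2 = c by omega, show (a + b) / 2 = c by omega]
    obtain rfl : b = 2 * c - a := by omega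
    nlinarith [sq_nonneg (a - c)]
  · rw [show (a + b + 1) / 2 = c + 1 by omega, show (a + b) / 2 = c by omega]
    obtain rfl : b = 2 * c + 1 - a := by omega
    rcases le_or_gt a c with h | h <;> nlinarith

theorem sq_ceil_half_add_sq_floor_half_lt {a b : ℤ} (hab : 2 ≤ (a - b).natAbs) :
    ((a + b + 1) / 2) ^ 2 + ((a + b) / 2) ^ 2 < a ^ 2 + b ^ 2 := by
  rcases Int.even_or_odd' (a + b) with ⟨c, hc | hc⟩
  · rw [show (a + b + 1) / 2 = c by omega, show (a + b) / 2 = c by omega]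
    obtain rfl : b = 2 * c - a := by omega
    have : a - c ≠ 0 := by omega
    nlinarith [sq_pos_of_ne_zero this]
  · rw [show (a + b + 1) / 2 = c + 1 by omega, show (a + b) / 2 = c by omega]
    obtain rfl : b = 2 * c + 1 - a := by omega
    rcases le_or_gt a c with h | h
    · have : a < c := by omega
      nlinarith
    · have : c + 1 < a := by omega
      nlinarith

theorem sum_sq_avg_lt {n : ℕ} {a b : Fin n → ℤ} (hab : 2 ≤ linf (a - b)) :
    ∑ i, avgUp a b i ^ 2 + ∑ i, avgDown a b i ^ 2 < ∑ i, a i ^ 2 + ∑ i, b i ^ 2 := by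
  obtain ⟨i, hi⟩ := (two_le_linf_iff _).1 hab
  simp only [← Finset.sum_add_distrib, avgUp_apply, avgDown_apply]
  exact Finset.sum_lt_sum (fun j _ => sq_ceil_half_add_sq_floor_half_le _ _)
    ⟨i, Finset.mem_univ i, sq_ceil_half_add_sq_floor_half_lt hi⟩

theorem le_of_sum_eq_card_nsmul {T : Multiset ℤ} {p : ℤ} (hsum : T.sum = T.card • p)
    (hclose : ∀ a ∈ T, ∀ b ∈ T, a ≤ b + 1) {a : ℤ} (ha : a ∈ T) : a ≤ p := by
  by_contra! hlt
  obtain ⟨U, rfl⟩ := Multiset.exists_cons_of_mem ha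
  have hU : U.card • p ≤ U.sum := Multiset.card_nsmul_le_sum fun b hb => by
    have := hclose a ha b (Multiset.mem_cons_of_mem hb)
    omega
  rw [Multiset.sum_cons, Multiset.card_cons, succ_nsmul] at hsum
  omega

theorem eq_of_sum_eq_card_nsmul {T : Multiset ℤ} {p : ℤ} (hsum : T.sum = T.card • p)
    (hclose : ∀ a ∈ T, ∀ b ∈ T, a ≤ b + 1) {a : ℤ} (ha : a ∈ T) : a = p := by
  refine le_antisymm (le_of_sum_eq_card_nsmul hsum hclose ha) ?_
  have := le_of_sum_eq_card_nsmul (T := T.map Neg.neg) (p := -p) (a := -a)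
    (by rw [Multiset.sum_map_neg, Multiset.map_id', Multiset.card_map, hsum, smul_neg]) (by
      simp only [Multiset.mem_map, forall_exists_index, and_imp, forall_apply_eq_imp_iff₂]
      intro b hb c hc
      have := hclose c hc b hb
      omega) (Multiset.mem_map_of_mem _ ha)
  omega

/-- A discrete midpoint convex set contains every integer point that is the average of a
nonempty finite family of its points. -/
theorem DMCSet.mem_of_sum_eq_card_nsmul {n : ℕ} {S : Set (Fin n → ℤ)} (hS : DMCSet S)
    {p : Fin n → ℤ} (T : Multiset (Fin n → ℤ)) (hT : ∀ s ∈ T, s ∈ S)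
    (hsum : T.sum = T.card • p) (h0 : T ≠ 0) : p ∈ S := by
  by_cases hfar : ∃ a b U, T = a ::ₘ b ::ₘ U ∧ 2 ≤ linf (a - b)
  · obtain ⟨a, b, U, rfl, hab⟩ := hfar
    have hlt := sum_sq_avg_lt hab
    have hU : 0 ≤ (U.map fun s => ∑ i, s i ^ 2).sum :=
      Multiset.sum_nonneg fun x hx => by
        obtain ⟨s, -, rfl⟩ := Multiset.mem_map.1 hx
        positivity
    have hup : 0 ≤ ∑ i, avgUp a b i ^ 2 := by positivity
    have hdown : 0 ≤ ∑ i, avgDown a b i ^ 2 := by positivity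
    have hmid := hS (hT a (by simp)) (hT b (by simp)) hab
    refine hS.mem_of_sum_eq_card_nsmul (avgUp a b ::ₘ avgDown a b ::ₘ U) ?_ ?_ (by simp)
    · intro s hs
      simp only [Multiset.mem_cons] at hs
      rcases hs with rfl | rfl | hs
      exacts [hmid.1, hmid.2, hT s (by simp [hs])]
    · simp only [Multiset.sum_cons, Multiset.card_cons, ← add_assoc] at hsum ⊢
      rw [avgUp_add_avgDown, hsum]
  · obtain ⟨a, ha⟩ := Multiset.exists_mem_of_ne_zero h0
    suffices a = p from this ▸ hT a ha
    funext i
    refine eq_of_sum_eq_card_nsmul (T := T.map fun s => s i) ?_ ?_ (Multiset.mem_map_of_mem _ ha)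
    · have := (map_multiset_sum (Pi.evalAddMonoidHom (fun _ : Fin n => ℤ) i) T).symm
      simpa [hsum] using this
    · simp only [Multiset.mem_map, forall_exists_index, and_imp, forall_apply_eq_imp_iff₂]
      intro b hb c hc
      by_contra! hbc
      obtain ⟨U, rfl⟩ := Multiset.exists_cons_of_mem hb
      rcases Multiset.mem_cons.1 hc with rfl | hc
      · omega
      obtain ⟨V, rfl⟩ := Multiset.exists_cons_of_mem hc
      refine hfar ⟨b, c, V, rfl, (two_le_linf_iff _).2 ⟨i, ?_⟩⟩
      simp only [Pi.sub_apply]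
      omega
termination_by (T.map fun s : Fin n → ℤ => ∑ i, s i ^ 2).sum.toNat
decreasing_by
  simp only [*, Multiset.map_cons, Multiset.sum_cons]
  omega

theorem DMCSet.nsmul_mem {n : ℕ} {S : Set (Fin n → ℤ)} (hS : DMCSet S) {x : Fin n → ℤ}
    {α k : ℕ} (h0 : 0 ∈ S) (hx : α • x ∈ S) (hk : k ≤ α) : k • x ∈ S := by
  rcases Nat.eq_zero_or_pos α with rfl | hα
  · obtain rfl : k = 0 := by omega
    simpa using h0
  refine hS.mem_of_sum_eq_card_nsmul
    (Multiset.replicate (α - k) 0 + Multiset.replicate k (α • x)) ?_ ?_ ?_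
  · intro s hs
    rcases Multiset.mem_add.1 hs with hs | hs
    · rwa [Multiset.eq_of_mem_replicate hs]
    · rwa [Multiset.eq_of_mem_replicate hs]
  · rw [Multiset.sum_add, Multiset.sum_replicate, Multiset.sum_replicate, Multiset.card_add,
      Multiset.card_replicate, Multiset.card_replicate, Nat.sub_add_cancel hk, smul_zero,
      zero_add, smul_comm]
  · intro h
    have := congrArg Multiset.card h
    simp at this
    omega

theorem GloballyDMC.dmcSet_effDom {n : ℕ} {f : (Fin n → ℤ) → WithTop ℝ} (h : GloballyDMC f) :
    DMCSet (effDom f) := by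
  intro x hx y hy hxy
  have := ne_top_of_le_ne_top (WithTop.add_ne_top.2 ⟨hx, hy⟩) (h x y hxy)
  exact WithTop.add_ne_top.1 this

theorem avgUp_add_right {n : ℕ} (p x : Fin n → ℤ) : avgUp p (p + x) = p + avgUp 0 x := by
  funext i
  simp only [Pi.add_apply, avgUp_apply, Pi.zero_apply]
  omega

theorem avgDown_add_right {n : ℕ} (p x : Fin n → ℤ) :
    avgDown p (p + x) = p + avgDown 0 x := by
  funext i
  simp only [Pi.add_apply, avgDown_apply, Pi.zero_apply]
  omega

theorem add_nsmul_avg {n : ℕ} (x : Fin n → ℤ) (i j : ℕ) :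
    (i + 1) • avgUp 0 x + (j + 1) • avgDown 0 x = i • avgUp 0 x + j • avgDown 0 x + x := by
  have := avgUp_add_avgDown 0 x
  rw [zero_add] at this
  calc
    _ = i • avgUp 0 x + j • avgDown 0 x + (avgUp 0 x + avgDown 0 x) := by
      simp only [succ_nsmul]
      abel
    _ = _ := by rw [this]

/-- The points `i • ⌈x/2⌉ + j • ⌊x/2⌋` with `i, j ≤ α` lie in every discrete midpoint convex
set containing `0` and `α • x`. -/
theorem DMCSet.nsmul_avg_mem {n : ℕ} {S : Set (Fin n → ℤ)} (hS : DMCSet S) {x : Fin n → ℤ}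
    (hx : 2 ≤ linf x) {α : ℕ} (h0 : 0 ∈ S) (hax : α • x ∈ S) {i j : ℕ} (hi : i ≤ α)
    (hj : j ≤ α) : i • avgUp 0 x + j • avgDown 0 x ∈ S := by
  have step : ∀ i j : ℕ, i • avgUp 0 x + j • avgDown 0 x ∈ S →
      (i + 1) • avgUp 0 x + (j + 1) • avgDown 0 x ∈ S →
      (i + 1) • avgUp 0 x + j • avgDown 0 x ∈ S ∧
        i • avgUp 0 x + (j + 1) • avgDown 0 x ∈ S := by
    intro i j hp hq
    rw [add_nsmul_avg] at hq
    have := hS hp hq (by simpa [two_le_linf_iff] using hx)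
    rw [avgUp_add_right, avgDown_add_right] at this
    simpa only [succ_nsmul, add_right_comm _ (avgUp 0 x), ← add_assoc] using this
  have key : ∀ d k : ℕ, k + d ≤ α →
      (k + d) • avgUp 0 x + k • avgDown 0 x ∈ S ∧
        k • avgUp 0 x + (k + d) • avgDown 0 x ∈ S := by
    intro d
    induction d with
    | zero =>
      intro k hk
      have := hS.nsmul_mem h0 hax hk
      rw [add_zero, ← nsmul_add, avgUp_add_avgDown, zero_add]
      exact ⟨this, this⟩
    | succ d ih =>
      intro k hk
      have h₁ := ih k (by omega)
      have h₂ := ih (k + 1) (by omega)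
      rw [add_right_comm] at h₂
      exact ⟨(step _ _ h₁.1 h₂.1).1, (step _ _ h₁.2 h₂.2).2⟩
  rcases le_total i j with hij | hij
  · obtain ⟨d, rfl⟩ := Nat.exists_eq_add_of_le hij
    exact (key d i hj).2
  · obtain ⟨d, rfl⟩ := Nat.exists_eq_add_of_le hij
    exact (key d j hi).1

/-- Summing the supermodular inequality over all unit cells of a square grid. -/
theorem corner_le_of_cell_le {g : ℕ → ℕ → ℝ} {α : ℕ}
    (hg : ∀ i < α, ∀ j < α, g (i + 1) j + g i (j + 1) ≤ g i j + g (i + 1) (j + 1)) :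
    g α 0 + g 0 α ≤ g 0 0 + g α α := by
  have row : ∀ i < α, g (i + 1) 0 - g i 0 ≤ g (i + 1) α - g i α := by
    intro i hi
    have := Finset.sum_nonneg (s := Finset.range α)
      (f := fun j => (g (i + 1) (j + 1) - g i (j + 1)) - (g (i + 1) j - g i j))
      fun j hj => by linarith [hg i hi j (Finset.mem_range.1 hj)]
    rw [Finset.sum_range_sub fun j => g (i + 1) j - g i j] at this
    linarith
  have := Finset.sum_le_sum fun i hi => row i (Finset.mem_range.1 hi)
  rw [Finset.sum_range_sub fun i => g i 0, Finset.sum_range_sub fun i => g i α] at this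
  linarith

/-- For a globally discrete midpoint convex function `f`, a positive integer
`α`, and `x` with `0, αx ∈ dom f` and `‖x‖∞ ≥ 2`:
`f(0) + f(αx) ≥ f(α⌊x/2⌋) + f(α⌈x/2⌉)`. -/
theorem globallyDMC_scaled_midpoint {n : ℕ} (f : (Fin n → ℤ) → WithTop ℝ)
    (h : GloballyDMC f) (α : ℕ) (hα : 0 < α) (x : Fin n → ℤ)
    (h0 : (0 : Fin n → ℤ) ∈ effDom f) (hax : (α : ℤ) • x ∈ effDom f)
    (hx : 2 ≤ linf x) :
    f ((α : ℤ) • fun i => ⌊((x i : ℚ)) / 2⌋) +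
      f ((α : ℤ) • fun i => ⌈((x i : ℚ)) / 2⌉) ≤
    f 0 + f ((α : ℤ) • x) := by
  have hdown : (fun i => ⌊(x i : ℚ) / 2⌋) = avgDown 0 x := by
    funext i
    simp [avgDown]
  have hup : (fun i => ⌈(x i : ℚ) / 2⌉) = avgUp 0 x := by
    funext i
    simp [avgUp]
  rw [hdown, hup]
  simp only [natCast_zsmul] at hax ⊢
  set P : ℕ → ℕ → Fin n → ℤ := fun i j => i • avgUp 0 x + j • avgDown 0 x with hP
  have hfin : ∀ i ≤ α, ∀ j ≤ α, f (P i j) = ((f (P i j)).untopD 0 : ℝ) := by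
    intro i hi j hj
    obtain ⟨r, hr⟩ := WithTop.ne_top_iff_exists.1
      (h.dmcSet_effDom.nsmul_avg_mem hx h0 hax hi hj)
    rw [← hr, WithTop.untopD_coe]
  have hcell : ∀ i j, f (P (i + 1) j) + f (P i (j + 1)) ≤ f (P i j) + f (P (i + 1) (j + 1)) := by
    intro i j
    have := h (P i j) (P i j + x) (by simpa [two_le_linf_iff] using hx)
    rw [DMCPair, avgUp_add_right, avgDown_add_right] at this
    simpa only [hP, add_nsmul_avg, succ_nsmul, add_right_comm _ (avgUp 0 x), ← add_assoc]
      using this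
  have hcorner := corner_le_of_cell_le (g := fun i j => (f (P i j)).untopD 0) (α := α) (by
    intro i hi j hj
    have := hcell i j
    rw [hfin i (by omega) j (by omega), hfin (i + 1) hi j (by omega),
      hfin i (by omega) (j + 1) hj, hfin (i + 1) hi (j + 1) hj] at this
    exact_mod_cast this)
  have h00 : P 0 0 = 0 := by simp [hP]
  have hα0 : P α 0 = α • avgUp 0 x := by simp [hP]
  have h0α : P 0 α = α • avgDown 0 x := by simp [hP]
  have hαα : P α α = α • x := by
    simp only [hP]
    rw [← nsmul_add, avgUp_add_avgDown, zero_add]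
  rw [← hα0, ← h0α, ← hαα, ← h00, hfin 0 (by omega) 0 (by omega), hfin α le_rfl 0 (by omega),
    hfin 0 (by omega) α le_rfl, hfin α le_rfl α le_rfl, add_comm]
  exact_mod_cast hcorner
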